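/- Every analytic self-map φ : D → D induces a well-defined bounded composition operator C_φ on H²_h(D), with operator norm ‖C_φ‖ ≤ 2·√((1+|φ(0)|)/(1−|φ(0)|)). -/

import Mathlib

noncomputable section
open Complex Metric Filter Set MeasureTheory
open scoped Real ComplexConjugate ComplexInnerProductSpace

/-- The underlying `ℓ²` space of square-summable complex sequences. -/
abbrev ℓ2 : Type := lp (fun _ : ℕ => ℂ) 2

/-- The Hilbert space `H²ₕ(𝔻)` of complex-valued harmonic functions on the unit disc,
represented by the pair of coefficient sequences `(aₙ)ₙ` and `(conj bₙ)ₙ`,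
with the `L²` product norm. -/
abbrev Hh : Type := WithLp 2 (ℓ2 × ℓ2)

/-- The analytic-part Taylor coefficients `aₙ` of `f = h + conj g`. -/
def aCoef (f : Hh) : ℕ → ℂ := fun n => (WithLp.equiv 2 (ℓ2 × ℓ2) f).1 n

/-- The co-analytic-part Taylor coefficients `bₙ` of `f = h + conj g`. -/
def bCoef (f : Hh) : ℕ → ℂ := fun n => conj ((WithLp.equiv 2 (ℓ2 × ℓ2) f).2 n)

/-- The harmonic function on the disc determined by an element of `H²ₕ(𝔻)`:
`f(z) = Σ aₙ zⁿ + conj (Σ bₙ zⁿ)`. -/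
def toFun (f : Hh) (z : ℂ) : ℂ :=
  (∑' n : ℕ, aCoef f n * z ^ n) + conj (∑' n : ℕ, bCoef f n * z ^ n)

lemma memℓ2_pow {α : ℂ} (h : ‖α‖ < 1) : Memℓp (fun n : ℕ => α ^ n) 2 := by
  apply memℓp_gen
  have h2 : Summable (fun n : ℕ => (‖α‖ ^ 2) ^ n) :=
    summable_geometric_of_lt_one (by positivity) (by nlinarith [norm_nonneg α])
  refine h2.congr fun n => ?_
  rw [show ((2 : ENNReal)).toReal = ((2 : ℕ) : ℝ) by norm_num, Real.rpow_natCast, norm_pow,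
    ← pow_mul, ← pow_mul, Nat.mul_comm]

/-- The reproducing kernel `K_α(z) = 1/(1 - conj α · z) + 1/(1 - α · conj z)` of `H²ₕ(𝔻)`,
as an element of `Hh` (junk value `0` when `α` is outside the unit disc). -/
def kernel (α : ℂ) : Hh :=
  if h : ‖α‖ < 1 then
    (WithLp.equiv 2 (ℓ2 × ℓ2)).symm
      (⟨fun n => (conj α) ^ n, memℓ2_pow (by simpa using h)⟩,
       ⟨fun n => α ^ n, memℓ2_pow h⟩)
  else 0

/-- `F = C_φ f`, i.e. `F` is obtained from `f = h + conj g` by composing each part with `φ`: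
on the unit disc, the analytic part of `F` is `h ∘ φ` and the co-analytic part is `conj (g ∘ φ)`. -/
def Represents (φ : ℂ → ℂ) (f F : Hh) : Prop :=
  ∀ z ∈ ball (0 : ℂ) 1,
    ((∑' n : ℕ, aCoef F n * z ^ n) = ∑' n : ℕ, aCoef f n * (φ z) ^ n) ∧
    ((∑' n : ℕ, bCoef F n * z ^ n) = ∑' n : ℕ, bCoef f n * (φ z) ^ n)

/-- The Poisson kernel `P_r(x)` for the unit disc. -/
def poisson (r x : ℝ) : ℝ := (1 - r ^ 2) / (1 - 2 * r * Real.cos x + r ^ 2)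

/-- A real-valued function is harmonic on a set: it is `C²` there and its Laplacian vanishes. -/
def HarmonicOnDisc (u : ℂ → ℝ) (s : Set ℂ) : Prop :=
  ContDiffOn ℝ 2 u s ∧
    ∀ z ∈ s, iteratedFDeriv ℝ 2 u z ![1, 1] + iteratedFDeriv ℝ 2 u z ![Complex.I, Complex.I] = 0

/-!
For `f` holomorphic near a closed disc `|z| ≤ R < 1`, `|f|²` lies below the Poisson integral `u`
of its boundary values. As `u` is the real part of a holomorphic function, so is `u ∘ φ`, and the
mean value property gives `avg |f ∘ φ|² ≤ u (φ 0)` on every circle `|z| = r` that `φ` maps into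
`|w| < R`. Bounding the Poisson kernel by `(R + |φ 0|) / (R - |φ 0|)`, then letting `R → 1` and
`r → 1`, Parseval's identity yields `∑ |cₙ|² ≤ (1 + |φ 0|) / (1 - |φ 0|) * ∑ |aₙ|²` for the
coefficients `cₙ` of `f ∘ φ`. The squared norm of `H²ₕ(𝔻)` adds up the analytic and co-analytic
parts, so the same constant works for both together.
-/

section CircleAverage

variable {E : Type*} [NormedAddCommGroup E] {c : ℂ} {R : ℝ}

lemma circleIntegrable_of_continuousOn_closedBall {f : ℂ → E}
    (hf : ContinuousOn f (closedBall c |R|)) : CircleIntegrable f c R :=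
  (hf.mono sphere_subset_closedBall).circleIntegrable'

lemma norm_circleAverage_le_circleAverage_norm [NormedSpace ℝ E] (f : ℂ → E) (c : ℂ) (R : ℝ) :
    ‖Real.circleAverage f c R‖ ≤ Real.circleAverage (fun z ↦ ‖f z‖) c R := by
  rw [Real.circleAverage, Real.circleAverage, norm_smul, smul_eq_mul,
    Real.norm_of_nonneg (by positivity)]
  gcongr
  exact intervalIntegral.norm_integral_le_integral_norm Real.two_pi_pos.le

lemma tendsto_circleAverage_of_norm_le [NormedSpace ℝ E] {ι : Type*} {l : Filter ι}
    [l.IsCountablyGenerated] {F : ι → ℂ → E} {f : ℂ → E} {B : ℝ}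
    (hF : ∀ i, CircleIntegrable (F i) c R) (hB : ∀ i, ∀ z ∈ sphere c |R|, ‖F i z‖ ≤ B)
    (hlim : ∀ z ∈ sphere c |R|, Tendsto (F · z) l (nhds (f z))) :
    Tendsto (fun i ↦ Real.circleAverage (F i) c R) l (nhds (Real.circleAverage f c R)) :=
  (intervalIntegral.tendsto_integral_filter_of_dominated_convergence (fun _ ↦ B)
    (.of_forall fun i ↦ (intervalIntegrable_iff.1 (hF i)).aestronglyMeasurable)
    (.of_forall fun i ↦ .of_forall fun θ _ ↦ hB i _ (circleMap_mem_sphere' c R θ))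
    intervalIntegrable_const
    (.of_forall fun θ _ ↦ hlim _ (circleMap_mem_sphere' c R θ))).const_smul _

lemma circleAverage_re_eq_of_diffContOnCl {h : ℂ → ℂ} (hh : DiffContOnCl ℂ h (ball c |R|)) :
    Real.circleAverage (fun z ↦ (h z).re) c R = (h c).re := by
  rw [← hh.circleAverage, ← reCLM_apply, ← reCLM.circleAverage_comp_comm
    (circleIntegrable_of_continuousOn_closedBall hh.continuousOn_ball)]
  rfl

end CircleAverage

section Subordination

/-- The Poisson integral of boundary data `g` on the circle `|z| = R`, as a function on the disc
`|w| < R`. The Poisson kernel is written as the real part of the Herglotz–Riesz kernel. -/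
def poissonIntegral (g : ℂ → ℝ) (R : ℝ) (w : ℂ) : ℝ :=
  Real.circleAverage ((re ∘ herglotzRieszKernel 0 w) • g) 0 R

variable {E : Type*} [NormedAddCommGroup E] [NormedSpace ℂ E] {f : ℂ → E} {g : ℂ → ℝ}
  {R : ℝ} {w : ℂ}

lemma exists_differentiableOn_re_eq_poissonIntegral (hg : CircleIntegrable g 0 R) :
    ∃ H : ℂ → ℂ, DifferentiableOn ℂ H (ball 0 R) ∧
      ∀ w ∈ ball 0 R, (H w).re = poissonIntegral g R w := by
  have hgC : CircleIntegrable (fun ζ ↦ (g ζ : ℂ)) 0 R :=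
    ⟨hg.1.ofReal, hg.2.ofReal⟩
  exact ⟨_, differentiableOn_circleAverage_herglotzRieszKernel_smul hgC,
    fun w hw ↦ re_circleAverage_herglotzRieszKernel_smul hg hw⟩

lemma re_herglotzRieszKernel_nonneg {c z : ℂ} (hz : z ∈ sphere c R) (hw : w ∈ ball c R) :
    0 ≤ (herglotzRieszKernel c w z).re := by
  have hwR : ‖w - c‖ < R := mem_ball_iff_norm.1 hw
  calc 0 ≤ (R - ‖w - c‖) / (R + ‖w - c‖) :=
        div_nonneg (by linarith) (by linarith [norm_nonneg (w - c)])
    _ ≤ (herglotzRieszKernel c w z).re := le_re_herglotzRieszKernel hz hw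

lemma norm_le_poissonIntegral_norm [CompleteSpace E] (hf : DiffContOnCl ℂ f (ball 0 R))
    (hw : w ∈ ball 0 R) : ‖f w‖ ≤ poissonIntegral (fun z ↦ ‖f z‖) R w := by
  have hR : |R| = R := abs_of_pos (pos_of_mem_ball hw)
  calc ‖f w‖ = ‖Real.circleAverage ((re ∘ herglotzRieszKernel 0 w) • f) 0 R‖ := by
        rw [hf.circleAverage_re_herglotzRieszKernel_smul hw]
    _ ≤ Real.circleAverage (fun z ↦ ‖((re ∘ herglotzRieszKernel 0 w) • f) z‖) 0 R :=
        norm_circleAverage_le_circleAverage_norm _ _ _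
    _ = poissonIntegral (fun z ↦ ‖f z‖) R w := Real.circleAverage_congr_sphere fun z hz ↦ by
        simp [norm_smul, abs_of_nonneg (re_herglotzRieszKernel_nonneg (hR ▸ hz) hw)]

lemma poissonIntegral_le (hg : CircleIntegrable g 0 R) (hg₀ : ∀ z ∈ sphere 0 R, 0 ≤ g z)
    (hw : w ∈ ball 0 R) :
    poissonIntegral g R w ≤ (R + ‖w‖) / (R - ‖w‖) * Real.circleAverage g 0 R := by
  have hR : |R| = R := abs_of_pos (pos_of_mem_ball hw)
  have hPg : CircleIntegrable ((re ∘ herglotzRieszKernel 0 w) • g) 0 R :=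
    hg.continuousOn_smul
      (continuous_re.comp_continuousOn (continuousOn_herglotzRieszKernel_sphere hw))
  rw [← smul_eq_mul, ← Real.circleAverage_smul]
  refine Real.circleAverage_mono hPg hg.const_smul fun z hz ↦ ?_
  rw [hR] at hz
  have hker : (herglotzRieszKernel 0 w z).re ≤ (R + ‖w‖) / (R - ‖w‖) := by
    simpa only [herglotzRieszKernel_def, sub_zero] using re_herglotzRieszKernel_le hz hw
  exact mul_le_mul_of_nonneg_right hker (hg₀ z hz)

/-- A form of **Littlewood's subordination principle**. -/
theorem circleAverage_norm_comp_le [CompleteSpace E] {φ : ℂ → ℂ} {c : ℂ} {r : ℝ}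
    (hf : DiffContOnCl ℂ f (ball 0 R)) (hφ : DiffContOnCl ℂ φ (ball c |r|))
    (hmap : MapsTo φ (closedBall c |r|) (ball 0 R)) :
    Real.circleAverage (fun z ↦ ‖f (φ z)‖) c r ≤
      (R + ‖φ c‖) / (R - ‖φ c‖) * Real.circleAverage (fun z ↦ ‖f z‖) 0 R := by
  have hc : φ c ∈ ball 0 R := hmap (mem_closedBall_self (abs_nonneg r))
  have hR : |R| = R := abs_of_pos (pos_of_mem_ball hc)
  have hfint : CircleIntegrable (fun z ↦ ‖f z‖) 0 R :=
    circleIntegrable_of_continuousOn_closedBall (hR.symm ▸ hf.continuousOn_ball.norm)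
  obtain ⟨H, hH, re_H⟩ := exists_differentiableOn_re_eq_poissonIntegral hfint
  have hHφ : DiffContOnCl ℂ (H ∘ φ) (ball c |r|) :=
    .mk_ball (hH.comp hφ.differentiableOn (hmap.mono_left ball_subset_closedBall))
      (hH.continuousOn.comp hφ.continuousOn_ball hmap)
  calc Real.circleAverage (fun z ↦ ‖f (φ z)‖) c r
      ≤ Real.circleAverage (fun z ↦ (H (φ z)).re) c r := by
        refine Real.circleAverage_mono
          (circleIntegrable_of_continuousOn_closedBall
            (hf.differentiableOn.continuousOn.comp hφ.continuousOn_ball hmap).norm)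
          (circleIntegrable_of_continuousOn_closedBall
            (continuous_re.comp_continuousOn hHφ.continuousOn_ball)) fun z hz ↦ ?_
        have hφz : φ z ∈ ball 0 R := hmap (sphere_subset_closedBall hz)
        exact (norm_le_poissonIntegral_norm hf hφz).trans_eq (re_H _ hφz).symm
    _ = poissonIntegral (fun z ↦ ‖f z‖) R (φ c) :=
        (circleAverage_re_eq_of_diffContOnCl hHφ).trans (re_H _ hc)
    _ ≤ (R + ‖φ c‖) / (R - ‖φ c‖) * Real.circleAverage (fun z ↦ ‖f z‖) 0 R :=
        poissonIntegral_le hfint (fun _ _ ↦ norm_nonneg _) hc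

end Subordination

section PowerSeries

variable {c : ℕ → ℂ} {f : ℂ → ℂ} {r : ℝ}

lemma sum_range_norm_sq_eq_circleAverage (c : ℕ → ℂ) (r : ℝ) (N : ℕ) :
    ∑ n ∈ Finset.range N, ‖c n‖ ^ 2 * (r ^ n) ^ 2 =
      Real.circleAverage (fun z ↦ ‖∑ n ∈ Finset.range N, c n * z ^ n‖ ^ 2) 0 r := by
  set p : Polynomial ℂ := ∑ n ∈ Finset.range N, Polynomial.monomial n (c n * r ^ n)
  have hcoeff (n : ℕ) : p.coeff n = if n < N then c n * r ^ n else 0 := by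
    simp [p, Polynomial.finsetSum_coeff, Polynomial.coeff_monomial]
  have hsupp : p.support ⊆ Finset.range N := fun n hn ↦ by
    by_contra hnN
    simp_all
  have heval (z : ℂ) : p.eval z = ∑ n ∈ Finset.range N, c n * (r * z) ^ n := by
    simp [p, Polynomial.eval_finsetSum, mul_pow, mul_assoc]
  calc ∑ n ∈ Finset.range N, ‖c n‖ ^ 2 * (r ^ n) ^ 2
      = ∑ n ∈ Finset.range N, ‖p.coeff n‖ ^ 2 := Finset.sum_congr rfl fun n hn ↦ by
        rw [hcoeff, if_pos (Finset.mem_range.1 hn), norm_mul, mul_pow, ← ofReal_pow, norm_real,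
          Real.norm_eq_abs, sq_abs]
    _ = ∑ n ∈ p.support, ‖p.coeff n‖ ^ 2 :=
        (Finset.sum_subset hsupp fun n _ hn ↦ by
          simp [Polynomial.notMem_support_iff.1 hn]).symm
    _ = _ := by
        simp_rw [p.sum_sq_norm_coeff_eq_circleAverage, heval,
          Real.circleAverage_eq_circleAverage_zero_one (R := r), add_zero]

theorem hasSum_norm_sq_circleAverage
    (hf : ∀ z ∈ sphere 0 |r|, HasSum (fun n ↦ c n * z ^ n) (f z)) :
    HasSum (fun n ↦ ‖c n‖ ^ 2 * (r ^ n) ^ 2) (Real.circleAverage (fun z ↦ ‖f z‖ ^ 2) 0 r) := by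
  have hsum : Summable fun n ↦ ‖c n‖ * |r| ^ n := by
    simpa using (hf r (by simp)).summable.norm
  rw [hasSum_iff_tendsto_nat_of_nonneg fun n ↦ by positivity]
  simp_rw [sum_range_norm_sq_eq_circleAverage]
  refine tendsto_circleAverage_of_norm_le (B := (∑' n, ‖c n‖ * |r| ^ n) ^ 2)
    (fun N ↦ circleIntegrable_of_continuousOn_closedBall (by fun_prop)) (fun N z hz ↦ ?_)
    fun z hz ↦ (hf z hz).tendsto_sum_nat.norm.pow 2
  have hz' : ‖z‖ = |r| := by simpa using hz
  rw [norm_pow, norm_norm]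
  gcongr
  calc ‖∑ n ∈ Finset.range N, c n * z ^ n‖
      ≤ ∑ n ∈ Finset.range N, ‖c n‖ * |r| ^ n := by
        simpa [hz'] using norm_sum_le (Finset.range N) fun n ↦ c n * z ^ n
    _ ≤ ∑' n, ‖c n‖ * |r| ^ n := hsum.sum_le_tsum _ fun _ _ ↦ by positivity

/-- The power series with coefficients `c` converges to `f` throughout the unit disc. -/
def HasPowerSeriesOnDisc (f : ℂ → ℂ) (c : ℕ → ℂ) : Prop :=
  ∀ z ∈ ball (0 : ℂ) 1, HasSum (fun n ↦ c n * z ^ n) (f z)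

lemma hasPowerSeriesOnDisc_tsum (hc : Summable fun n ↦ ‖c n‖ ^ 2) :
    HasPowerSeriesOnDisc (fun z ↦ ∑' n, c n * z ^ n) c := by
  intro z hz
  have hgeom : Summable fun n : ℕ ↦ ‖z ^ n‖ ^ 2 := by
    simpa using (memℓp_gen_iff (by norm_num)).1 (memℓ2_pow (mem_ball_zero_iff.1 hz))
  refine (Summable.of_norm_bounded (hc.add hgeom) fun n ↦ ?_).hasSum
  rw [norm_mul]
  nlinarith [two_mul_le_add_sq ‖c n‖ ‖z ^ n‖, sq_nonneg ‖c n‖, sq_nonneg ‖z ^ n‖]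

lemma exists_hasPowerSeriesOnDisc (hf : DifferentiableOn ℂ f (ball 0 1)) :
    ∃ c, HasPowerSeriesOnDisc f c := by
  refine ⟨fun n ↦ (n.factorial : ℂ)⁻¹ * iteratedDeriv n f 0, fun z hz ↦ ?_⟩
  simpa [mul_comm, mul_left_comm] using hasSum_taylorSeries_on_ball hf hz

namespace HasPowerSeriesOnDisc

lemma differentiableOn (hf : HasPowerSeriesOnDisc f c) : DifferentiableOn ℂ f (ball 0 1) := by
  intro z hz
  obtain ⟨s, hzs, hs1⟩ := exists_between (mem_ball_zero_iff.1 hz)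
  have hs0 : 0 ≤ s := (norm_nonneg z).trans hzs.le
  have hsum : Summable fun n ↦ ‖c n‖ * s ^ n := by
    simpa [abs_of_nonneg hs0] using
      (hf s (by simpa [abs_of_nonneg hs0] using hs1)).summable.norm
  have hdiff : DifferentiableOn ℂ (fun w ↦ ∑' n, c n * w ^ n) (ball 0 s) :=
    differentiableOn_tsum_of_summable_norm hsum (fun n ↦ by fun_prop) isOpen_ball fun n w hw ↦ by
      rw [norm_mul, norm_pow]
      gcongr
      exact (mem_ball_zero_iff.1 hw).le
  have heq : EqOn f (fun w ↦ ∑' n, c n * w ^ n) (ball 0 s) :=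
    fun w hw ↦ (hf w (ball_subset_ball hs1.le hw)).tsum_eq.symm
  exact ((hdiff.congr heq).differentiableAt
    (isOpen_ball.mem_nhds (mem_ball_zero_iff.2 hzs))).differentiableWithinAt

lemma hasSum_norm_sq (hf : HasPowerSeriesOnDisc f c) (hr : |r| < 1) :
    HasSum (fun n ↦ ‖c n‖ ^ 2 * (r ^ n) ^ 2) (Real.circleAverage (fun z ↦ ‖f z‖ ^ 2) 0 r) :=
  hasSum_norm_sq_circleAverage fun z hz ↦ hf z (sphere_subset_ball hr hz)

lemma circleAverage_norm_sq_le (hf : HasPowerSeriesOnDisc f c) (hc : Summable fun n ↦ ‖c n‖ ^ 2)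
    (hr : |r| < 1) : Real.circleAverage (fun z ↦ ‖f z‖ ^ 2) 0 r ≤ ∑' n, ‖c n‖ ^ 2 := by
  refine hasSum_le (fun n ↦ ?_) (hf.hasSum_norm_sq hr) hc.hasSum
  refine mul_le_of_le_one_right (by positivity) ?_
  rw [← sq_abs, abs_pow]
  exact pow_le_one₀ (by positivity) (pow_le_one₀ (abs_nonneg r) hr.le)

lemma sum_range_norm_sq_le {B : ℝ} (hf : HasPowerSeriesOnDisc f c)
    (hB : ∀ r ∈ Ioo (0 : ℝ) 1, Real.circleAverage (fun z ↦ ‖f z‖ ^ 2) 0 r ≤ B) (N : ℕ) :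
    ∑ n ∈ Finset.range N, ‖c n‖ ^ 2 ≤ B := by
  have hlim : Tendsto (fun r : ℝ ↦ ∑ n ∈ Finset.range N, ‖c n‖ ^ 2 * (r ^ n) ^ 2)
      (nhdsWithin 1 (Iio 1)) (nhds (∑ n ∈ Finset.range N, ‖c n‖ ^ 2)) := by
    have hcont : Continuous fun r : ℝ ↦ ∑ n ∈ Finset.range N, ‖c n‖ ^ 2 * (r ^ n) ^ 2 := by
      fun_prop
    simpa using (hcont.tendsto 1).mono_left nhdsWithin_le_nhds
  refine le_of_tendsto hlim (mem_of_superset (Ioo_mem_nhdsLT zero_lt_one) fun r hr ↦ ?_)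
  exact (sum_le_hasSum _ (fun n _ ↦ by positivity)
    (hf.hasSum_norm_sq (by rw [abs_of_pos hr.1]; exact hr.2))).trans (hB r hr)

end HasPowerSeriesOnDisc

end PowerSeries

section Composition

variable {a c : ℕ → ℂ} {f φ : ℂ → ℂ}

lemma circleAverage_norm_sq_comp_le_of_mapsTo_ball {r R : ℝ}
    (hφ : DiffContOnCl ℂ φ (ball 0 |r|)) (hmap : MapsTo φ (closedBall 0 |r|) (ball 0 R))
    (hR : R < 1) (hf : HasPowerSeriesOnDisc f a) (ha : Summable fun n ↦ ‖a n‖ ^ 2) :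
    Real.circleAverage (fun z ↦ ‖f (φ z)‖ ^ 2) 0 r ≤
      (R + ‖φ 0‖) / (R - ‖φ 0‖) * ∑' n, ‖a n‖ ^ 2 := by
  have hφ0 : ‖φ 0‖ < R := by simpa using hmap (mem_closedBall_self (abs_nonneg r))
  have hR0 : 0 < R := (norm_nonneg _).trans_lt hφ0
  have hC : 0 ≤ (R + ‖φ 0‖) / (R - ‖φ 0‖) := div_nonneg (by positivity) (sub_nonneg.2 hφ0.le)
  have hf_sq : DiffContOnCl ℂ (fun z ↦ f z ^ 2) (ball 0 R) :=
    (hf.differentiableOn.pow 2).diffContOnCl_ball (closedBall_subset_ball hR)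
  calc Real.circleAverage (fun z ↦ ‖f (φ z)‖ ^ 2) 0 r
      ≤ (R + ‖φ 0‖) / (R - ‖φ 0‖) * Real.circleAverage (fun z ↦ ‖f z‖ ^ 2) 0 R := by
        simpa only [norm_pow] using circleAverage_norm_comp_le hf_sq hφ hmap
    _ ≤ (R + ‖φ 0‖) / (R - ‖φ 0‖) * ∑' n, ‖a n‖ ^ 2 :=
        mul_le_mul_of_nonneg_left
          (hf.circleAverage_norm_sq_le ha (by rwa [abs_of_pos hR0])) hC

lemma circleAverage_norm_sq_comp_le (hφ : DifferentiableOn ℂ φ (ball 0 1))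
    (hmap : MapsTo φ (ball 0 1) (ball 0 1)) (hf : HasPowerSeriesOnDisc f a)
    (ha : Summable fun n ↦ ‖a n‖ ^ 2) {r : ℝ} (hr : |r| < 1) :
    Real.circleAverage (fun z ↦ ‖f (φ z)‖ ^ 2) 0 r ≤
      (1 + ‖φ 0‖) / (1 - ‖φ 0‖) * ∑' n, ‖a n‖ ^ 2 := by
  have hsub : closedBall (0 : ℂ) |r| ⊆ ball 0 1 := closedBall_subset_ball hr
  have hφr : DiffContOnCl ℂ φ (ball 0 |r|) := hφ.diffContOnCl_ball hsub
  have hφ0 : ‖φ 0‖ < 1 := by simpa using hmap (mem_ball_self one_pos)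
  obtain ⟨s, hs1, hs⟩ : ∃ s < 1, φ '' closedBall 0 |r| ⊆ ball 0 s :=
    exists_lt_subset_ball
      ((isCompact_closedBall _ _).image_of_continuousOn hφr.continuousOn_ball).isClosed
      (image_subset_iff.2 (hmap.mono_left hsub))
  have hlim : Tendsto (fun R ↦ (R + ‖φ 0‖) / (R - ‖φ 0‖) * ∑' n, ‖a n‖ ^ 2)
      (nhdsWithin 1 (Iio 1)) (nhds ((1 + ‖φ 0‖) / (1 - ‖φ 0‖) * ∑' n, ‖a n‖ ^ 2)) := by
    have hcont : ContinuousAt (fun R ↦ (R + ‖φ 0‖) / (R - ‖φ 0‖) * ∑' n, ‖a n‖ ^ 2) 1 := by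
      fun_prop (disch := linarith)
    exact hcont.tendsto.mono_left nhdsWithin_le_nhds
  refine ge_of_tendsto hlim (mem_of_superset (Ioo_mem_nhdsLT hs1) fun R hR ↦ ?_)
  exact circleAverage_norm_sq_comp_le_of_mapsTo_ball hφr
    (fun z hz ↦ ball_subset_ball hR.1.le (hs (mem_image_of_mem φ hz))) hR.2 hf ha

namespace HasPowerSeriesOnDisc

lemma sum_range_norm_sq_comp_le (hφ : DifferentiableOn ℂ φ (ball 0 1))
    (hmap : MapsTo φ (ball 0 1) (ball 0 1)) (hf : HasPowerSeriesOnDisc f a)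
    (ha : Summable fun n ↦ ‖a n‖ ^ 2) (hfφ : HasPowerSeriesOnDisc (f ∘ φ) c) (N : ℕ) :
    ∑ n ∈ Finset.range N, ‖c n‖ ^ 2 ≤ (1 + ‖φ 0‖) / (1 - ‖φ 0‖) * ∑' n, ‖a n‖ ^ 2 :=
  hfφ.sum_range_norm_sq_le (fun _ hr ↦ circleAverage_norm_sq_comp_le hφ hmap hf ha
    (by rw [abs_of_pos hr.1]; exact hr.2)) N

lemma exists_comp (hφ : DifferentiableOn ℂ φ (ball 0 1))
    (hmap : MapsTo φ (ball 0 1) (ball 0 1)) (hf : HasPowerSeriesOnDisc f a)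
    (ha : Summable fun n ↦ ‖a n‖ ^ 2) :
    ∃ c, HasPowerSeriesOnDisc (f ∘ φ) c ∧ Summable fun n ↦ ‖c n‖ ^ 2 := by
  obtain ⟨c, hc⟩ := exists_hasPowerSeriesOnDisc (hf.differentiableOn.comp hφ hmap)
  exact ⟨c, hc, summable_of_sum_range_le (fun _ ↦ by positivity)
    (hf.sum_range_norm_sq_comp_le hφ hmap ha hc)⟩

lemma tsum_norm_sq_comp_le (hφ : DifferentiableOn ℂ φ (ball 0 1))
    (hmap : MapsTo φ (ball 0 1) (ball 0 1)) (hf : HasPowerSeriesOnDisc f a)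
    (ha : Summable fun n ↦ ‖a n‖ ^ 2) (hfφ : HasPowerSeriesOnDisc (f ∘ φ) c) :
    ∑' n, ‖c n‖ ^ 2 ≤ (1 + ‖φ 0‖) / (1 - ‖φ 0‖) * ∑' n, ‖a n‖ ^ 2 :=
  Real.tsum_le_of_sum_range_le (fun _ ↦ by positivity)
    (hf.sum_range_norm_sq_comp_le hφ hmap ha hfφ)

end HasPowerSeriesOnDisc

end Composition

section HarmonicHardySpace

variable {φ : ℂ → ℂ}

lemma hasSum_norm_sq_aCoef (f : Hh) : HasSum (fun n ↦ ‖aCoef f n‖ ^ 2) (‖f.fst‖ ^ 2) := by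
  simpa [aCoef] using lp.hasSum_norm (p := 2) (by norm_num) f.fst

lemma hasSum_norm_sq_bCoef (f : Hh) : HasSum (fun n ↦ ‖bCoef f n‖ ^ 2) (‖f.snd‖ ^ 2) := by
  simpa [bCoef] using lp.hasSum_norm (p := 2) (by norm_num) f.snd

lemma norm_sq_eq_tsum_add_tsum (f : Hh) :
    ‖f‖ ^ 2 = ∑' n, ‖aCoef f n‖ ^ 2 + ∑' n, ‖bCoef f n‖ ^ 2 := by
  rw [WithLp.prod_norm_sq_eq_of_L2, (hasSum_norm_sq_aCoef f).tsum_eq,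
    (hasSum_norm_sq_bCoef f).tsum_eq]

lemma exists_aCoef_eq_bCoef_eq {a b : ℕ → ℂ} (ha : Summable fun n ↦ ‖a n‖ ^ 2)
    (hb : Summable fun n ↦ ‖b n‖ ^ 2) : ∃ f : Hh, aCoef f = a ∧ bCoef f = b :=
  ⟨(WithLp.equiv 2 (ℓ2 × ℓ2)).symm (⟨a, memℓp_gen (by simpa using ha)⟩,
    ⟨fun n ↦ conj (b n), memℓp_gen (by simpa using hb)⟩), rfl, by ext; simp [bCoef]⟩

theorem exists_represents (hφ : DifferentiableOn ℂ φ (ball 0 1))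
    (hmap : MapsTo φ (ball 0 1) (ball 0 1)) (f : Hh) : ∃ F : Hh, Represents φ f F := by
  have ha := (hasSum_norm_sq_aCoef f).summable
  have hb := (hasSum_norm_sq_bCoef f).summable
  obtain ⟨c, hc, hc_sq⟩ := (hasPowerSeriesOnDisc_tsum ha).exists_comp hφ hmap ha
  obtain ⟨d, hd, hd_sq⟩ := (hasPowerSeriesOnDisc_tsum hb).exists_comp hφ hmap hb
  obtain ⟨F, rfl, rfl⟩ := exists_aCoef_eq_bCoef_eq hc_sq hd_sq
  exact ⟨F, fun z hz ↦ ⟨(hc z hz).tsum_eq, (hd z hz).tsum_eq⟩⟩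

lemma tsum_norm_sq_le_of_tsum_eq_comp {a c : ℕ → ℂ} (hφ : DifferentiableOn ℂ φ (ball 0 1))
    (hmap : MapsTo φ (ball 0 1) (ball 0 1)) (ha : Summable fun n ↦ ‖a n‖ ^ 2)
    (hc : Summable fun n ↦ ‖c n‖ ^ 2)
    (hcomp : ∀ z ∈ ball (0 : ℂ) 1, ∑' n, c n * z ^ n = ∑' n, a n * φ z ^ n) :
    ∑' n, ‖c n‖ ^ 2 ≤ (1 + ‖φ 0‖) / (1 - ‖φ 0‖) * ∑' n, ‖a n‖ ^ 2 :=
  (hasPowerSeriesOnDisc_tsum ha).tsum_norm_sq_comp_le hφ hmap ha fun z hz ↦ by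
    simpa only [Function.comp_apply, ← hcomp z hz] using hasPowerSeriesOnDisc_tsum hc z hz

theorem Represents.norm_sq_le {f F : Hh} (hφ : DifferentiableOn ℂ φ (ball 0 1))
    (hmap : MapsTo φ (ball 0 1) (ball 0 1)) (hF : Represents φ f F) :
    ‖F‖ ^ 2 ≤ (1 + ‖φ 0‖) / (1 - ‖φ 0‖) * ‖f‖ ^ 2 := by
  rw [norm_sq_eq_tsum_add_tsum, norm_sq_eq_tsum_add_tsum, mul_add]
  exact add_le_add
    (tsum_norm_sq_le_of_tsum_eq_comp hφ hmap (hasSum_norm_sq_aCoef f).summable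
      (hasSum_norm_sq_aCoef F).summable fun z hz ↦ (hF z hz).1)
    (tsum_norm_sq_le_of_tsum_eq_comp hφ hmap (hasSum_norm_sq_bCoef f).summable
      (hasSum_norm_sq_bCoef F).summable fun z hz ↦ (hF z hz).2)

end HarmonicHardySpace

theorem stmt_10_general (φ : ℂ → ℂ) (hφ : DifferentiableOn ℂ φ (ball (0 : ℂ) 1))
    (hmap : MapsTo φ (ball (0 : ℂ) 1) (ball (0 : ℂ) 1)) :
    (∀ f : Hh, ∃ F : Hh, Represents φ f F) ∧
    ∀ f F : Hh, Represents φ f F →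
      ‖F‖ ≤ Real.sqrt ((1 + ‖φ 0‖) / (1 - ‖φ 0‖)) * ‖f‖ := by
  refine ⟨exists_represents hφ hmap, fun f F hF ↦ ?_⟩
  rw [← Real.sqrt_sq (norm_nonneg F), ← Real.sqrt_sq (norm_nonneg f),
    ← Real.sqrt_mul' _ (sq_nonneg ‖f‖)]
  exact Real.sqrt_le_sqrt (hF.norm_sq_le hφ hmap)

/-- Every analytic self-map `φ` of the unit disc induces a well-defined
bounded composition operator `C_φ` on `H²ₕ(𝔻)`, with
`‖C_φ‖ ≤ 2 √((1 + |φ(0)|)/(1 - |φ(0)|))`. -/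
theorem stmt_10 (φ : ℂ → ℂ) (hφ : DifferentiableOn ℂ φ (ball (0 : ℂ) 1))
    (hmap : MapsTo φ (ball (0 : ℂ) 1) (ball (0 : ℂ) 1)) :
    (∀ f : Hh, ∃ F : Hh, Represents φ f F) ∧
    ∀ f F : Hh, Represents φ f F →
      ‖F‖ ≤ 2 * Real.sqrt ((1 + ‖φ 0‖) / (1 - ‖φ 0‖)) * ‖f‖ := by
  obtain ⟨hex, hle⟩ := stmt_10_general φ hφ hmap
  refine ⟨hex, fun f F hF ↦ (hle f F hF).trans ?_⟩
  gcongr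
  exact le_mul_of_one_le_left (Real.sqrt_nonneg _) one_le_two
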